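/- arXiv:math/9903192 — 3 statements merged into one kernel-verified Lean document; each statement's English description precedes it below -/
import Mathlib

section
/- Let D be a minimal Enriques diagram with exactly one root R. Let S be a vertex of D and let V and W be successors of S. Then: (i) m_R ≥ m_S ≥ m_V; (ii) if m_S = m_V, then W is either a successor of V or a predecessor of V, and in the latter case m_W = m_V and V is not remotely proximate to W; (iii) if m_S = 1 and V is a leaf, then m_V = 1 and V is remotely proximate to some proper predecessor of S. -/
open Classical Finset

/-- The raw data of a finite weighted forest equipped with a proximity relation.
The vertices are the elements of `Fin n`; `parent v` is the immediate predecessor of `v`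
(`none` iff `v` is a root); `wt v` is the weight of `v`; and `prox a b` means
that `a` is proximate to `b`. -/
structure PreDiagram where
  n : ℕ
  parent : Fin n → Option (Fin n)
  wt : Fin n → ℕ
  prox : Fin n → Fin n → Prop

namespace PreDiagram

variable (D : PreDiagram)

/-- `a` is the immediate predecessor of `b`. -/
def ImPred (a b : Fin D.n) : Prop := D.parent b = some a

/-- `a` is a predecessor of `b` (reflexive-transitive closure of `ImPred`). -/
def Pred (a b : Fin D.n) : Prop := Relation.ReflTransGen D.ImPred a b

/-- `a` is a proper predecessor of `b`. -/
def ProperPred (a b : Fin D.n) : Prop := Relation.TransGen D.ImPred a b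

/-- `a` is a remote predecessor of `b`: a proper but not immediate predecessor. -/
def RemotePred (a b : Fin D.n) : Prop := D.ProperPred a b ∧ ¬ D.ImPred a b

def IsRoot (v : Fin D.n) : Prop := D.parent v = none

/-- A leaf is a vertex with no proper successor. -/
def IsLeaf (v : Fin D.n) : Prop := ∀ w, ¬ D.ImPred v w

/-- `a` is remotely proximate to `b`: proximate to `b`, and `b` is a remote predecessor. -/
def RemoteProx (a b : Fin D.n) : Prop := D.prox a b ∧ D.RemotePred b a

/-- A satellite is a vertex proximate to a remote predecessor. -/
def IsSatellite (v : Fin D.n) : Prop := ∃ t, D.RemoteProx v t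

/-- A free vertex is one that is not a satellite. -/
def IsFree (v : Fin D.n) : Prop := ¬ D.IsSatellite v

/-- The laws of a minimal Enriques diagram. -/
structure IsMED : Prop where
  /-- The graph is a forest: no vertex is a proper predecessor of itself. -/
  forest : ∀ v, ¬ D.ProperPred v v
  /-- Every weight is at least `1`. -/
  wt_pos : ∀ v, 1 ≤ D.wt v
  /-- Law of Proximity: a root is proximate to no vertex. -/
  root_not_prox : ∀ v, D.IsRoot v → ∀ w, ¬ D.prox v w
  /-- Law of Proximity: a non-root is proximate to its immediate predecessor. -/
  prox_parent : ∀ v u, D.parent v = some u → D.prox v u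
  /-- Law of Proximity: any other vertex a non-root is proximate to is a remote predecessor. -/
  prox_remote : ∀ v u w, D.parent v = some u → D.prox v w → w ≠ u → D.RemotePred w v
  /-- Law of Proximity: a non-root is proximate to at most one vertex other than its
  immediate predecessor. -/
  prox_unique : ∀ v u w w', D.parent v = some u → D.prox v w → D.prox v w' →
      w ≠ u → w' ≠ u → w = w'
  /-- Law of Proximity: if `a` is proximate to `b` and `c` lies properly between them,
  then `c` is proximate to `b`. -/
  prox_between : ∀ a b c, D.prox a b → D.ProperPred b c → D.ProperPred c a → D.prox c b
  /-- Proximity Inequality. -/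
  prox_ineq : ∀ v, ∑ w ∈ univ.filter (fun w => D.prox w v), D.wt w ≤ D.wt v
  /-- Law of Succession: a vertex `v` has at most `wt v` immediate successors. -/
  succ_card : ∀ v, (univ.filter (fun w => D.ImPred v w)).card ≤ D.wt v
  /-- Law of Succession: at most two immediate successors are satellites. -/
  succ_sat : ∀ v w₁ w₂ w₃, D.ImPred v w₁ → D.ImPred v w₂ → D.ImPred v w₃ →
      D.IsSatellite w₁ → D.IsSatellite w₂ → D.IsSatellite w₃ →
      w₁ ≠ w₂ → w₁ ≠ w₃ → w₂ ≠ w₃ → False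
  /-- Law of Succession: two distinct immediate successors of the same vertex cannot be
  satellites of the same vertex. -/
  succ_sat_diff : ∀ v w₁ w₂ t, D.ImPred v w₁ → D.ImPred v w₂ → w₁ ≠ w₂ →
      D.RemoteProx w₁ t → D.RemoteProx w₂ t → False
  /-- Law of Minimality: every leaf of weight `1` is a satellite. -/
  minimal : ∀ v, D.IsLeaf v → D.wt v = 1 → D.IsSatellite v

/-- The number of roots. -/
noncomputable def rts : ℕ := (univ.filter (fun v => D.IsRoot v)).card

/-- The number of free vertices. -/
noncomputable def frs : ℕ := (univ.filter (fun v => D.IsFree v)).card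

/-- `dim D = rts D + frs D`. -/
noncomputable def dimD : ℕ := D.rts + D.frs

/-- `deg D = Σ_V C(m_V + 1, 2)`. -/
def degD : ℕ := ∑ v, (D.wt v + 1).choose 2

/-- `cod D = deg D - dim D`. -/
noncomputable def cod : ℤ := (D.degD : ℤ) - (D.dimD : ℤ)

/-- `δ(D) = Σ_V C(m_V, 2)`. -/
def deltaD : ℕ := ∑ v, (D.wt v).choose 2

/-- `r(D) = Σ_V (m_V - Σ_{W ≻ V} m_W)`. -/
noncomputable def rCh : ℤ :=
  ∑ v, ((D.wt v : ℤ) - ∑ w ∈ univ.filter (fun w => D.prox w v), (D.wt w : ℤ))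

/-- `μ(D) = 2 δ(D) - r(D) + rts D`. -/
noncomputable def mu : ℤ := 2 * (D.deltaD : ℤ) - D.rCh + (D.rts : ℤ)

/-- An isomorphism of diagrams: a weight-preserving bijection of the vertices preserving
the immediate-predecessor and proximity relations. -/
structure Iso (D₁ D₂ : PreDiagram) where
  toEquiv : Fin D₁.n ≃ Fin D₂.n
  wt_eq : ∀ v, D₂.wt (toEquiv v) = D₁.wt v
  imPred_iff : ∀ a b, D₂.ImPred (toEquiv a) (toEquiv b) ↔ D₁.ImPred a b
  prox_iff : ∀ a b, D₂.prox (toEquiv a) (toEquiv b) ↔ D₁.prox a b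

def Isomorphic (D₁ D₂ : PreDiagram) : Prop := Nonempty (Iso D₁ D₂)

/-- A realization of `D'` as a subdiagram of `D`: an injection of the vertices such that
the weight of a vertex of `D'` is at most its weight in `D`, and the succession
(predecessor) and proximity relations of `D'` are the ones induced from `D`. -/
structure Subdiagram (D' D : PreDiagram) where
  toFun : Fin D'.n → Fin D.n
  inj : Function.Injective toFun
  wt_le : ∀ v, D'.wt v ≤ D.wt (toFun v)
  pred_iff : ∀ a b, D'.Pred a b ↔ D.Pred (toFun a) (toFun b)
  prox_iff : ∀ a b, D'.prox a b ↔ D.prox (toFun a) (toFun b)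

def IsSubdiagram (D' D : PreDiagram) : Prop := Nonempty (Subdiagram D' D)

/-- The parent function of a chain `0 → 1 → ⋯ → n-1`. -/
def chainParent (n : ℕ) (v : Fin n) : Option (Fin n) :=
  if v.val = 0 then none
  else some ⟨v.val - 1, lt_of_le_of_lt (Nat.sub_le _ _) v.isLt⟩

/-- The diagram `A_k` (`k ≥ 1`): for `k = 2i-1`, a chain of `i` free vertices of weight `2`;
for `k = 2i`, such a chain followed by a chain of two vertices of weight `1`, both
proximate to the `i`-th weight-`2` vertex. -/
def diagA (k : ℕ) : PreDiagram where
  n := if k % 2 = 0 then k / 2 + 2 else (k + 1) / 2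
  parent := chainParent _
  wt := fun v => if v.val < (k + 1) / 2 then 2 else 1
  prox := fun a b => a.val = b.val + 1 ∨
    (k % 2 = 0 ∧ a.val = k / 2 + 1 ∧ b.val + 1 = k / 2)

/-- The diagram `D_k` (`k ≥ 4`): a root of weight `3`, followed by nothing if `k = 4`,
by two vertices of weight `1` both proximate to the root if `k = 5`, and by the diagram
`A_{k-5}` if `k ≥ 6`. -/
def diagD (k : ℕ) : PreDiagram where
  n := (k - 4) / 2 + (if k % 2 = 0 then 1 else 3)
  parent := chainParent _
  wt := fun v => if v.val = 0 then 3 else if v.val ≤ (k - 4) / 2 then 2 else 1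
  prox := fun a b => a.val = b.val + 1 ∨
    (k % 2 = 1 ∧ a.val = (k - 4) / 2 + 2 ∧ b.val = (k - 4) / 2)

/-- The diagram `E_{6l+j}` (`l ≥ 1`, `j ∈ {0,1,2}`), with argument `m = 6l + j`. -/
def diagE (m : ℕ) : PreDiagram where
  n := m / 6 + (if m % 6 = 1 then 2 else 3)
  parent := chainParent _
  wt := fun v => if v.val < m / 6 then 3 else
    if 1 ≤ m % 6 ∧ v.val = m / 6 then 2 else 1
  prox := fun a b => a.val = b.val + 1 ∨
    (m % 6 = 0 ∧ (a.val = m / 6 + 1 ∨ a.val = m / 6 + 2) ∧ b.val + 1 = m / 6) ∨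
    (m % 6 = 1 ∧ a.val = m / 6 + 1 ∧ b.val + 1 = m / 6) ∨
    (m % 6 = 2 ∧ ((a.val = m / 6 + 1 ∧ b.val + 1 = m / 6) ∨
                  (a.val = m / 6 + 2 ∧ b.val = m / 6)))

/-- The diagram `J_{l,k}` (`l ≥ 2`, `k ≥ 0`): a chain of `l - 1` free vertices of weight `3`
followed by the diagram `D_{k+4}`. -/
def diagJ (l k : ℕ) : PreDiagram where
  n := (l - 1) + k / 2 + (if k % 2 = 0 then 1 else 3)
  parent := chainParent _
  wt := fun v => if v.val ≤ l - 1 then 3 else if v.val ≤ l - 1 + k / 2 then 2 else 1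
  prox := fun a b => a.val = b.val + 1 ∨
    (k % 2 = 1 ∧ a.val = (l - 1) + k / 2 + 2 ∧ b.val = (l - 1) + k / 2)

/-- The diagram `X_{1,0}`: a single root of weight `4`. -/
def diagX10 : PreDiagram where
  n := 1
  parent := chainParent _
  wt := fun _ => 4
  prox := fun a b => a.val = b.val + 1

/-- The diagram `X_{1,1}`: a root of weight `4` followed by a chain of two vertices of
weight `1`, both proximate to the root. -/
def diagX11 : PreDiagram where
  n := 3
  parent := chainParent _
  wt := fun v => if v.val = 0 then 4 else 1
  prox := fun a b => a.val = b.val + 1 ∨ (a.val = 2 ∧ b.val = 0)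

/-- The diagram `X_{1,2}`: a root of weight `4` followed by one free vertex of weight `2`. -/
def diagX12 : PreDiagram where
  n := 2
  parent := chainParent _
  wt := fun v => if v.val = 0 then 4 else 2
  prox := fun a b => a.val = b.val + 1

/-- The diagram `Z_{11}`: a root of weight `4` followed by a chain of three vertices of
weight `1`, all proximate to the root. -/
def diagZ11 : PreDiagram where
  n := 4
  parent := chainParent _
  wt := fun v => if v.val = 0 then 4 else 1
  prox := fun a b => a.val = b.val + 1 ∨ ((a.val = 2 ∨ a.val = 3) ∧ b.val = 0)

/-- The diagram `Y_{1,1}`: a root of weight `4` with two immediate free successors of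
weight `1`, each of which has one immediate successor of weight `1` that is remotely
proximate to the root. -/
def diagY11 : PreDiagram where
  n := 5
  parent := fun v =>
    if v.val = 0 then none
    else if v.val ≤ 2 then some ⟨0, by omega⟩
    else if v.val = 3 then some ⟨1, by omega⟩
    else some ⟨2, by omega⟩
  wt := fun v => if v.val = 0 then 4 else 1
  prox := fun a b => (a.val = 1 ∧ b.val = 0) ∨ (a.val = 2 ∧ b.val = 0) ∨
    (a.val = 3 ∧ (b.val = 1 ∨ b.val = 0)) ∨ (a.val = 4 ∧ (b.val = 2 ∨ b.val = 0))

/-- The disjoint union of two diagrams. -/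
def disjUnion (D₁ D₂ : PreDiagram) : PreDiagram where
  n := D₁.n + D₂.n
  parent := fun v =>
    if h : v.val < D₁.n then
      (D₁.parent ⟨v.val, h⟩).map
        (fun w => ⟨w.val, Nat.lt_of_lt_of_le w.isLt (Nat.le_add_right _ _)⟩)
    else
      (D₂.parent ⟨v.val - D₁.n, by have := v.isLt; omega⟩).map
        (fun w => ⟨D₁.n + w.val, by have := w.isLt; omega⟩)
  wt := fun v =>
    if h : v.val < D₁.n then D₁.wt ⟨v.val, h⟩
    else D₂.wt ⟨v.val - D₁.n, by have := v.isLt; omega⟩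
  prox := fun a b =>
    (∃ (ha : a.val < D₁.n) (hb : b.val < D₁.n), D₁.prox ⟨a.val, ha⟩ ⟨b.val, hb⟩) ∨
    (∃ (_ : D₁.n ≤ a.val) (_ : D₁.n ≤ b.val),
      D₂.prox ⟨a.val - D₁.n, by have := a.isLt; omega⟩
              ⟨b.val - D₁.n, by have := b.isLt; omega⟩)

end PreDiagram

namespace PreDiagram

theorem aux_one (D : PreDiagram) (hD : D.IsMED) {v w : Fin D.n} (h : D.prox w v) :
    D.wt w ≤ D.wt v := by
  refine le_trans ?_ (hD.prox_ineq v)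
  exact Finset.single_le_sum (f := D.wt) (fun _ _ => Nat.zero_le _) (by simpa using h)

theorem aux_two (D : PreDiagram) (hD : D.IsMED) {v w x : Fin D.n} (h : D.prox w v)
    (h' : D.prox x v) (hne : w ≠ x) : D.wt w + D.wt x ≤ D.wt v := by
  refine le_trans ?_ (hD.prox_ineq v)
  rw [← Finset.sum_pair (f := D.wt) hne]
  refine Finset.sum_le_sum_of_subset ?_
  intro y hy
  simp only [Finset.mem_insert, Finset.mem_singleton] at hy
  rcases hy with rfl | rfl <;> simpa

theorem aux_mono (D : PreDiagram) (hD : D.IsMED) {a b : Fin D.n} (h : D.Pred a b) :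
    D.wt b ≤ D.wt a := by
  induction h with
  | refl => exact le_rfl
  | tail _ h2 ih => exact (aux_one D hD (hD.prox_parent _ _ h2)).trans ih

theorem aux_cmp (D : PreDiagram) {a b c : Fin D.n} (h : D.Pred a c) (h' : D.Pred b c) :
    D.Pred a b ∨ D.Pred b a := by
  induction h with
  | refl => exact Or.inr h'
  | @tail x y h1 h2 ih =>
    rcases Relation.ReflTransGen.cases_tail h' with h3 | ⟨z, hz, hzy⟩
    · subst h3
      exact Or.inl (h1.tail h2)
    · have : z = x := by
        unfold ImPred at h2 hzy
        rw [h2] at hzy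
        exact (Option.some.inj hzy).symm
      subst this
      exact ih hz

theorem aux_root (D : PreDiagram) (hD : D.IsMED) (R : Fin D.n)
    (huniq : ∀ v, D.IsRoot v → v = R) (S : Fin D.n) : D.Pred R S := by
  have : IsTrans (Fin D.n) D.ProperPred := ⟨fun _ _ _ => Relation.TransGen.trans⟩
  have : Std.Irrefl D.ProperPred := ⟨hD.forest⟩
  have wf : WellFounded D.ProperPred := Finite.wellFounded_of_trans_of_irrefl _
  induction S using wf.induction with
  | _ S ih =>
    rcases h : D.parent S with _ | u
    · rw [huniq S h]; exact Relation.ReflTransGen.refl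
    · exact (ih u (Relation.TransGen.single h)).tail h

theorem aux_chain (D : PreDiagram) (hD : D.IsMED) {S V W : Fin D.n} (hV : D.Pred S V)
    (hW : D.Pred S W) (he : D.wt S = D.wt V) : D.Pred V W ∨ D.Pred W V := by
  unfold Pred at hV
  induction hV using Relation.ReflTransGen.head_induction_on with
  | refl => exact Or.inl hW
  | @head a c hac hcV ih =>
    rcases Relation.ReflTransGen.cases_head hW with h3 | ⟨z, hz, hzW⟩
    · subst h3
      exact Or.inr (hcV.head hac)
    · have h1 := aux_mono D hD hcV
      have h2 := aux_one D hD (hD.prox_parent _ _ hac)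
      have : c = z := by
        by_contra hne
        have := aux_two D hD (hD.prox_parent _ _ hac) (hD.prox_parent _ _ hz) hne
        have := hD.wt_pos z
        omega
      subst this
      exact ih hzW (by omega)

theorem aux_remote (D : PreDiagram) (hD : D.IsMED) {V W : Fin D.n}
    (he : D.wt W = D.wt V) : ¬ D.RemoteProx V W := by
  rintro ⟨hp, hpp, hni⟩
  obtain ⟨c, hc, hcV⟩ := Relation.TransGen.head'_iff.1 hpp
  have hne : c ≠ V := by
    rintro rfl
    exact hni hc
  have := aux_two D hD (hD.prox_parent _ _ hc) hp hne
  have := hD.wt_pos c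
  omega

end PreDiagram

open PreDiagram Finset in
/-- Lemma (2.1): in a minimal Enriques diagram with exactly one root `R`, for a vertex `S`
and successors `V`, `W` of `S`: (i) `m_R ≥ m_S ≥ m_V`; (ii) if `m_S = m_V` then `W` is a
successor or a predecessor of `V`, and in the latter case `m_W = m_V` and `V` is not
remotely proximate to `W`; (iii) if `m_S = 1` and `V` is a leaf, then `m_V = 1` and `V` is
remotely proximate to some proper predecessor of `S`. -/
theorem statement0 (D : PreDiagram) (hD : D.IsMED) (R : Fin D.n)
    (hR : D.IsRoot R) (huniq : ∀ v, D.IsRoot v → v = R)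
    (S V W : Fin D.n) (hV : D.Pred S V) (hW : D.Pred S W) :
    (D.wt S ≤ D.wt R ∧ D.wt V ≤ D.wt S) ∧
    (D.wt S = D.wt V →
      (D.Pred V W ∨ D.Pred W V) ∧
      (D.Pred W V → D.wt W = D.wt V ∧ ¬ D.RemoteProx V W)) ∧
    (D.wt S = 1 → D.IsLeaf V →
      D.wt V = 1 ∧ ∃ t, D.RemoteProx V t ∧ D.ProperPred t S) := by
  have hSV := aux_mono D hD hV
  refine ⟨⟨aux_mono D hD (aux_root D hD R huniq S), hSV⟩, ?_, ?_⟩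
  · intro he
    refine ⟨aux_chain D hD hV hW he, fun h => ?_⟩
    have h1 := aux_mono D hD hW
    have h2 := aux_mono D hD h
    have h3 : D.wt W = D.wt V := by omega
    exact ⟨h3, aux_remote D hD h3⟩
  · intro h1 hl
    have h2 := hD.wt_pos V
    have h3 : D.wt V = 1 := by omega
    obtain ⟨t, ht⟩ := hD.minimal V hl h3
    refine ⟨h3, t, ht, ?_⟩
    have htV : D.Pred t V := ht.2.1.to_reflTransGen
    have key : ¬ D.Pred S t := by
      intro h
      have h4 := aux_mono D hD h
      have h5 := aux_mono D hD htV
      exact aux_remote D hD (by omega) ht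
    rcases aux_cmp D htV hV with h | h
    · rcases Relation.reflTransGen_iff_eq_or_transGen.1 h with h' | h'
      · exact absurd (h' ▸ Relation.ReflTransGen.refl) key
      · exact h'
    · exact absurd h key
end

section
/- Let D be a minimal Enriques diagram with exactly one root R. If m_R = 2, then D is isomorphic to the diagram A_k for some k ≥ 1. -/
open Classical Finset

namespace PreDiagram

theorem sum2 {D : PreDiagram} (hD : D.IsMED) {a b v : Fin D.n} (ha : D.prox a v)
    (hb : D.prox b v) (hab : a ≠ b) : D.wt a + D.wt b ≤ D.wt v := by
  refine le_trans ?_ (hD.prox_ineq v)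
  rw [← Finset.sum_pair hab]
  apply Finset.sum_le_sum_of_subset
  intro x hx
  simp only [Finset.mem_insert, Finset.mem_singleton] at hx
  rcases hx with rfl | rfl <;> simp [*]

theorem sum3 {D : PreDiagram} (hD : D.IsMED) {a b c v : Fin D.n} (ha : D.prox a v)
    (hb : D.prox b v) (hc : D.prox c v) (hab : a ≠ b) (hac : a ≠ c) (hbc : b ≠ c) :
    D.wt a + (D.wt b + D.wt c) ≤ D.wt v := by
  refine le_trans ?_ (hD.prox_ineq v)
  rw [← Finset.sum_pair hbc, ← Finset.sum_insert (by simp [hab, hac])]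
  apply Finset.sum_le_sum_of_subset
  intro x hx
  simp only [Finset.mem_insert, Finset.mem_singleton] at hx
  rcases hx with rfl | rfl | rfl <;> simp [*]

theorem wt_child {D : PreDiagram} (hD : D.IsMED) {a v : Fin D.n} (h : D.ImPred v a) :
    D.wt a ≤ D.wt v := by
  refine le_trans ?_ (hD.prox_ineq v)
  exact Finset.single_le_sum (f := D.wt) (fun _ _ => Nat.zero_le _)
    (by simpa using hD.prox_parent _ _ h)

theorem wt_pred {D : PreDiagram} (hD : D.IsMED) {a v : Fin D.n} (h : D.Pred v a) :
    D.wt a ≤ D.wt v := by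
  induction h with
  | refl => exact le_rfl
  | tail _ h ih => exact (wt_child hD h).trans ih

theorem properPred_child {D : PreDiagram} {a u v : Fin D.n} (h : D.ImPred u v) :
    D.ProperPred a v ↔ D.Pred a u := by
  constructor
  · intro h'
    obtain ⟨c, hc, hcv⟩ := (Relation.TransGen.tail'_iff).1 h'
    have : c = u := by
      unfold ImPred at h hcv
      rw [h] at hcv
      exact (Option.some.inj hcv).symm
    exact this ▸ hc
  · intro h'
    exact Relation.TransGen.tail' h' h

/-- The number of proper predecessors. -/
noncomputable def dep (D : PreDiagram) (v : Fin D.n) : ℕ :=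
  (univ.filter (fun u => D.ProperPred u v)).card

theorem dep_child {D : PreDiagram} (hD : D.IsMED) {u v : Fin D.n} (h : D.ImPred u v) :
    D.dep v = D.dep u + 1 := by
  unfold dep
  rw [← Finset.card_insert_of_notMem (a := u) (by simpa using hD.forest u)]
  congr 1
  ext x
  simp only [Finset.mem_filter, Finset.mem_univ, true_and, Finset.mem_insert]
  rw [properPred_child h]
  unfold Pred ProperPred
  rw [Relation.reflTransGen_iff_eq_or_transGen]
  simp [eq_comm]

theorem dep_properPred {D : PreDiagram} (hD : D.IsMED) {u v : Fin D.n} (h : D.ProperPred u v) :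
    D.dep u < D.dep v := by
  induction h with
  | single h => rw [dep_child hD h]; omega
  | tail _ h ih => rw [dep_child hD h]; omega

theorem dep_pred {D : PreDiagram} (hD : D.IsMED) {u v : Fin D.n} (h : D.Pred u v) :
    D.dep u ≤ D.dep v := by
  induction h with
  | refl => exact le_rfl
  | tail _ h ih => rw [dep_child hD h]; omega

theorem dep_root {D : PreDiagram} {u : Fin D.n} (h : D.IsRoot u) :
    D.dep u = 0 := by
  unfold dep
  rw [Finset.card_eq_zero, Finset.filter_eq_empty_iff]
  intro x _ h'
  obtain ⟨c, _, hcv⟩ := (Relation.TransGen.tail'_iff).1 h'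
  unfold ImPred at hcv
  unfold IsRoot at h
  simp [h] at hcv

theorem dep_lt {D : PreDiagram} (hD : D.IsMED) (v : Fin D.n) : D.dep v < D.n := by
  unfold dep
  have : (univ.filter (fun u => D.ProperPred u v)).card < (univ : Finset (Fin D.n)).card := by
    apply Finset.card_lt_card
    rw [Finset.ssubset_univ_iff]
    intro h
    have := Finset.mem_univ v
    rw [← h] at this
    exact hD.forest v (by simpa using this)
  simpa using this

theorem root_or {D : PreDiagram} (v : Fin D.n) : D.IsRoot v ∨ ∃ u, D.ImPred u v := by
  unfold IsRoot ImPred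
  cases h : D.parent v <;> simp

theorem root_pred {D : PreDiagram} (hD : D.IsMED) {R : Fin D.n}
    (huniq : ∀ v, D.IsRoot v → v = R) (v : Fin D.n) : D.Pred R v := by
  induction hn : D.dep v using Nat.strong_induction_on generalizing v with
  | _ n ih =>
    rcases root_or v with h | ⟨u, h⟩
    · rw [huniq v h]; exact Relation.ReflTransGen.refl
    · have := dep_child hD h
      exact (ih (D.dep u) (by omega) u rfl).tail h

theorem exists_leaf {D : PreDiagram} (hD : D.IsMED) (v : Fin D.n) :
    ∃ L, D.Pred v L ∧ D.IsLeaf L := by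
  induction hn : D.n - D.dep v using Nat.strong_induction_on generalizing v with
  | _ n ih =>
    by_cases h : D.IsLeaf v
    · exact ⟨v, Relation.ReflTransGen.refl, h⟩
    · unfold IsLeaf at h
      push Not at h
      obtain ⟨w, hw⟩ := h
      have := dep_child hD hw
      have := dep_lt hD w
      obtain ⟨L, h1, h2⟩ := ih (D.n - D.dep w) (by omega) w rfl
      exact ⟨L, Relation.ReflTransGen.head hw h1, h2⟩

theorem pred_total {D : PreDiagram} {a b v : Fin D.n} (ha : D.Pred a v) (hb : D.Pred b v) :
    D.Pred a b ∨ D.Pred b a := by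
  induction ha with
  | refl => exact Or.inr hb
  | tail h1 h2 ih =>
    rcases (Relation.reflTransGen_iff_eq_or_transGen).1 hb with h | h
    · subst h; exact Or.inl (h1.tail h2)
    · exact ih ((properPred_child h2).1 h)

/-- Remote proximity, with the child in between. -/
theorem remote_child {D : PreDiagram} (hD : D.IsMED) {L T : Fin D.n} (h : D.RemoteProx L T) :
    ∃ c, D.ImPred T c ∧ D.ProperPred c L ∧ D.prox c T ∧ D.wt c + D.wt L ≤ D.wt T := by
  obtain ⟨hp, hr, hn⟩ := h
  obtain ⟨c, hc, hcL⟩ := (Relation.TransGen.head'_iff).1 hr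
  have hne : c ≠ L := by rintro rfl; exact hn hc
  have hcp : D.ProperPred c L := by
    rcases (Relation.reflTransGen_iff_eq_or_transGen).1 hcL with h | h
    · exact absurd h.symm hne
    · exact h
  exact ⟨c, hc, hcp, hD.prox_parent _ _ hc, sum2 hD (hD.prox_parent _ _ hc) hp hne⟩

theorem child_unique {D : PreDiagram} (hD : D.IsMED) (hle : ∀ v, D.wt v ≤ 2) {u a b : Fin D.n}
    (ha : D.ImPred u a) (hb : D.ImPred u b) : a = b := by
  by_contra hab
  have h1 := sum2 hD (hD.prox_parent _ _ ha) (hD.prox_parent _ _ hb) hab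
  have h2 := hle u
  have h3 := hD.wt_pos a
  have h4 := hD.wt_pos b
  obtain ⟨L, haL, hL⟩ := exists_leaf hD a
  have h5 := wt_pred hD haL
  have h6 := hD.wt_pos L
  obtain ⟨T, hT⟩ := hD.minimal L hL (by omega)
  obtain ⟨c, hc, hcL, hcT, hcw⟩ := remote_child hD hT
  have h7 := hle T
  have h8 := hD.wt_pos c
  rcases pred_total haL hT.2.1.to_reflTransGen with h | h
  · have := wt_pred hD h; omega
  · rcases (Relation.reflTransGen_iff_eq_or_transGen).1 h with h | h
    · subst h; omega
    · have hTu := (properPred_child ha).1 h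
      rcases (Relation.reflTransGen_iff_eq_or_transGen).1 hTu with h' | h'
      · subst h'
        have haL' : a ≠ L := by rintro rfl; exact hT.2.2 ha
        have hbL' : b ≠ L := by rintro rfl; exact hT.2.2 hb
        have := sum3 hD (hD.prox_parent _ _ ha) (hD.prox_parent _ _ hb) hT.1 hab haL' hbL'
        omega
      · have e1 := dep_properPred hD h'
        have e2 := dep_child hD hc
        have e3 := dep_child hD ha
        rcases pred_total haL hcL.to_reflTransGen with h9 | h9
        · have := dep_pred hD h9; omega
        · rcases (Relation.reflTransGen_iff_eq_or_transGen).1 h9 with h9 | h9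
          · subst h9; omega
          · have := wt_pred hD ((properPred_child ha).1 h9); omega

theorem dep_inj {D : PreDiagram} (hD : D.IsMED) (hle : ∀ v, D.wt v ≤ 2) {R : Fin D.n}
    (huniq : ∀ v, D.IsRoot v → v = R) (n : ℕ) :
    ∀ a b : Fin D.n, D.dep a = n → D.dep b = n → a = b := by
  induction n with
  | zero =>
    have key : ∀ a : Fin D.n, D.dep a = 0 → a = R := by
      intro a h
      rcases root_or a with h' | ⟨u, h'⟩
      · exact huniq a h'
      · have := dep_child hD h'; omega
    intro a b ha hb
    rw [key a ha, key b hb]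
  | succ n ih =>
    intro a b ha hb
    rcases root_or a with h | ⟨u, hu⟩
    · have := dep_root h; omega
    rcases root_or b with h | ⟨v, hv⟩
    · have := dep_root h; omega
    have e1 := dep_child hD hu
    have e2 := dep_child hD hv
    have := ih u v (by omega) (by omega)
    subst this
    exact child_unique hD hle hu hv

theorem imPred_chain {n : ℕ} {a b : Fin n} : chainParent n b = some a ↔ b.val = a.val + 1 := by
  unfold chainParent
  split_ifs with h
  · simp; omega
  · simp only [Option.some.injEq, Fin.ext_iff]; omega

end PreDiagram

open PreDiagram in
/-- A minimal Enriques diagram with exactly one root `R` of weight `2` is isomorphic to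
the diagram `A_k` for some `k ≥ 1`. -/
theorem statement2 (D : PreDiagram) (hD : D.IsMED) (R : Fin D.n)
    (hR : D.IsRoot R) (huniq : ∀ v, D.IsRoot v → v = R) (hw : D.wt R = 2) :
    ∃ k, 1 ≤ k ∧ Isomorphic D (diagA k) := by
  have hle : ∀ v, D.wt v ≤ 2 := fun v => hw ▸ wt_pred hD (root_pred hD huniq v)
  have hpos := hD.wt_pos
  have hinj : ∀ a b : Fin D.n, D.dep a = D.dep b → a = b :=
    fun a b h => dep_inj hD hle huniq _ a b h rfl
  have hlt := dep_lt hD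
  have hsurj : ∀ m, m < D.n → ∃ v, D.dep v = m := by
    intro m hm
    have hi : Function.Injective (fun v : Fin D.n => (⟨D.dep v, hlt v⟩ : Fin D.n)) := by
      intro a b h
      exact hinj a b (by simpa using h)
    obtain ⟨v, hv⟩ := (Finite.injective_iff_surjective.1 hi) ⟨m, hm⟩
    exact ⟨v, by simpa using hv⟩
  have him : ∀ a b, D.ImPred a b ↔ D.dep b = D.dep a + 1 := by
    intro a b
    refine ⟨dep_child hD, fun h => ?_⟩
    rcases root_or b with h' | ⟨u, hu⟩
    · have := dep_root h'; omega
    · have := dep_child hD hu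
      rwa [hinj a u (by omega)]
  have hpred : ∀ n a b, D.dep b = D.dep a + n → D.Pred a b := by
    intro n
    induction n with
    | zero => intro a b h; rw [hinj a b (by omega)]; exact Relation.ReflTransGen.refl
    | succ n ih =>
      intro a b h
      rcases root_or b with h' | ⟨u, hu⟩
      · have := dep_root h'; omega
      · have := dep_child hD hu
        exact (ih a u (by omega)).tail hu
  have hanti : ∀ a b, D.dep a ≤ D.dep b → D.wt b ≤ D.wt a := fun a b h =>
    wt_pred hD (hpred (D.dep b - D.dep a) a b (by omega))
  have hproper : ∀ a b, D.dep a < D.dep b → D.ProperPred a b := by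
    intro a b h
    rcases (Relation.reflTransGen_iff_eq_or_transGen).1
      (hpred (D.dep b - D.dep a) a b (by omega)) with h' | h'
    · subst h'; omega
    · exact h'
  -- proximity
  have hprox : ∀ a b, D.prox a b → D.dep a = D.dep b + 1 ∨ D.RemoteProx a b := by
    intro a b h
    rcases root_or a with h' | ⟨u, hu⟩
    · exact absurd h (hD.root_not_prox a h' b)
    · by_cases hb : b = u
      · subst hb; exact Or.inl (dep_child hD hu)
      · exact Or.inr ⟨h, hD.prox_remote a u b hu h hb⟩
  have hprox1 : ∀ a b, D.dep a = D.dep b + 1 → D.prox a b := fun a b h =>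
    hD.prox_parent _ _ ((him b a).2 h)
  -- general construction
  have build : ∀ k, (diagA k).n = D.n →
      (∀ v, D.wt v = if D.dep v < (k + 1) / 2 then 2 else 1) →
      (∀ a b, D.prox a b ↔ (D.dep a = D.dep b + 1 ∨
        (k % 2 = 0 ∧ D.dep a = k / 2 + 1 ∧ D.dep b + 1 = k / 2))) →
      Isomorphic D (diagA k) := by
    intro k hk hwt hpr
    let f : Fin D.n → Fin (diagA k).n := fun v => ⟨D.dep v, hk ▸ hlt v⟩
    have hf : Function.Bijective f := by
      constructor
      · intro a b h
        exact hinj a b (by simpa [f] using h)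
      · intro x
        obtain ⟨v, hv⟩ := hsurj x.val (hk ▸ x.isLt)
        exact ⟨v, Fin.ext hv⟩
    refine ⟨⟨Equiv.ofBijective f hf, ?_, ?_, ?_⟩⟩
    · intro v; rw [hwt v]; rfl
    · intro a b
      rw [him]
      exact imPred_chain
    · intro a b
      rw [hpr]; rfl
  have hn : 0 < D.n := R.pos
  obtain ⟨L, hL⟩ := hsurj (D.n - 1) (by omega)
  have hleaf : D.IsLeaf L := by
    intro w h
    have := dep_child hD h
    have := hlt w
    omega
  by_cases h2 : D.wt L = 2
  · have hall : ∀ v, D.wt v = 2 := by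
      intro v
      have := hanti v L (by have := hlt v; omega)
      have := hle v
      omega
    refine ⟨2 * D.n - 1, by omega, build _ ?_ ?_ ?_⟩
    · simp only [diagA]; split_ifs <;> omega
    · intro v
      have := hlt v
      rw [hall, if_pos (by omega)]
    · intro a b
      constructor
      · intro h
        rcases hprox a b h with h | h
        · exact Or.inl h
        · obtain ⟨c, _, _, _, hc⟩ := remote_child hD h
          rw [hall, hall, hall] at hc
          omega
      · rintro (h | h)
        · exact hprox1 a b h
        · omega
  · have hL1 : D.wt L = 1 := by have := hle L; have := hpos L; omega
    obtain ⟨T, hT⟩ := hD.minimal L hleaf hL1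
    obtain ⟨c, hc, hcL, hcT, hcw⟩ := remote_child hD hT
    have hcd := dep_child hD hc
    have hcl := dep_properPred hD hcL
    have hc0 := hpos c
    have hT2 := hle T
    have hdc : D.dep L = D.dep c + 1 := by
      by_contra hne
      obtain ⟨d, hd⟩ := hsurj (D.dep c + 1) (by omega)
      have hdT := hD.prox_between L T d hT.1 (hproper _ _ (by omega)) (hproper _ _ (by omega))
      have := sum3 hD hcT hdT hT.1 (by rintro rfl; omega) (by rintro rfl; omega)
        (by rintro rfl; omega)
      have := hpos d
      omega
    have hwt : ∀ v, D.wt v = if D.dep v < D.n - 2 then 2 else 1 := by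
      intro v
      have h1 := hle v
      have h2 := hpos v
      split_ifs with h
      · have := hanti v T (by omega); omega
      · have := hanti c v (by omega); omega
    refine ⟨2 * (D.n - 2), by omega, build _ ?_ ?_ ?_⟩
    · simp only [diagA]; split_ifs <;> omega
    · intro v
      rw [hwt v]
      congr 1
      apply propext
      omega
    · intro a b
      constructor
      · intro h
        rcases hprox a b h with h | h
        · exact Or.inl h
        · right
          obtain ⟨x, hx, hxa, _, hxw⟩ := remote_child hD h
          have e1 := dep_child hD hx
          have e2 := dep_properPred hD hxa
          have e3 := hle b
          have e4 := hpos a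
          have e5 := hpos x
          have e6 := hlt a
          have e7 : ¬ D.dep x < D.n - 2 := by
            intro h; have := hwt x; rw [if_pos h] at this; omega
          have e8 : D.dep b < D.n - 2 := by
            by_contra h; have := hwt b; rw [if_neg h] at this; omega
          omega
      · rintro (h | ⟨_, h, h'⟩)
        · exact hprox1 a b h
        · rw [hinj a L (by omega), hinj b T (by omega)]
          exact hT.1
end

section
/- Let D be a nonempty minimal Enriques diagram with exactly one root R. If cod(D) ≤ 10, then 2 ≤ m_R ≤ 4. -/
open Classical Finset

open PreDiagram in
/-- A nonempty minimal Enriques diagram with exactly one root `R` and `cod(D) ≤ 10`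
satisfies `2 ≤ m_R ≤ 4`. -/
theorem statement4 (D : PreDiagram) (hD : D.IsMED) (hne : 0 < D.n) (R : Fin D.n)
    (hR : D.IsRoot R) (huniq : ∀ v, D.IsRoot v → v = R) (hcod : D.cod ≤ 10) :
    2 ≤ D.wt R ∧ D.wt R ≤ 4 := by
  have hsat : ∀ v t, D.RemoteProx v t → 2 ≤ D.wt t := by
    rintro v t ⟨hp, hpp, hnp⟩
    obtain ⟨c, hc, hcv⟩ := Relation.TransGen.head'_iff.1 hpp
    have hne' : c ≠ v := by
      rintro rfl
      exact hnp hc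
    have hcp : D.prox c t := hD.prox_parent c t hc
    have h1 := hD.prox_ineq t
    have h2 : ∑ w ∈ ({c, v} : Finset (Fin D.n)), D.wt w
        ≤ ∑ w ∈ univ.filter (fun w => D.prox w t), D.wt w := by
      apply Finset.sum_le_sum_of_subset
      intro x hx
      simp only [Finset.mem_insert, Finset.mem_singleton] at hx
      rcases hx with rfl | rfl <;> simp [hcp, hp]
    rw [Finset.sum_pair hne'] at h2
    have := hD.wt_pos c
    have := hD.wt_pos v
    omega
  have hchoose : ∀ v, 1 ≤ (D.wt v + 1).choose 2 := fun v =>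
    Nat.choose_pos (by have := hD.wt_pos v; omega)
  constructor
  · by_contra hlt
    have hRw : D.wt R ≤ 1 := by omega
    have hirr : Std.Irrefl D.ProperPred := ⟨hD.forest⟩
    have htr : IsTrans (Fin D.n) D.ProperPred := ⟨fun _ _ _ h h' => Relation.TransGen.trans h h'⟩
    have hwf : WellFounded D.ProperPred := Finite.wellFounded_of_trans_of_irrefl _
    have hle : ∀ v, D.wt v ≤ 1 := by
      intro v
      induction v using hwf.induction with
      | _ v ih =>
        rcases hpar : D.parent v with _ | u
        · rw [huniq v hpar]
          exact hRw
        · have h1 := ih u (Relation.TransGen.single hpar)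
          have h2 := hD.prox_ineq u
          have h3 : D.wt v ≤ ∑ w ∈ univ.filter (fun w => D.prox w u), D.wt w :=
            Finset.single_le_sum (f := D.wt) (fun _ _ => Nat.zero_le _)
              (by simp [hD.prox_parent v u hpar])
          omega
    have hirr' : Std.Irrefl (Function.swap D.ProperPred) := ⟨hD.forest⟩
    have htr' : IsTrans (Fin D.n) (Function.swap D.ProperPred) :=
      ⟨fun _ _ _ h h' => Relation.TransGen.trans h' h⟩
    have hwf' : WellFounded (Function.swap D.ProperPred) :=
      Finite.wellFounded_of_trans_of_irrefl _
    obtain ⟨l, -, hl⟩ := hwf'.has_min Set.univ ⟨R, trivial⟩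
    have hleaf : D.IsLeaf l := fun w hw => hl w trivial (Relation.TransGen.single hw)
    have hw1 : D.wt l = 1 := le_antisymm (hle l) (hD.wt_pos l)
    obtain ⟨t, ht⟩ := hD.minimal l hleaf hw1
    have := hsat l t ht
    have := hle t
    omega
  · by_contra hlt
    have h5 : 5 ≤ D.wt R := by omega
    have hrts : D.rts ≤ 1 := by
      unfold rts
      rw [Finset.card_le_one]
      intro a ha b hb
      simp only [Finset.mem_filter, Finset.mem_univ, true_and] at ha hb
      rw [huniq a ha, huniq b hb]
    have hfrs : D.frs ≤ D.n := by
      unfold frs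
      exact (Finset.card_le_univ _).trans (by simp)
    have h15 : 15 ≤ (D.wt R + 1).choose 2 :=
      le_trans (by decide : 15 ≤ Nat.choose 6 2) (Nat.choose_le_choose 2 (by omega))
    have hdeg : D.n + 14 ≤ D.degD := by
      unfold degD
      rw [← Finset.add_sum_erase _ _ (Finset.mem_univ R)]
      have h := Finset.card_nsmul_le_sum (univ.erase R)
        (fun v => (D.wt v + 1).choose 2) 1 (fun v _ => hchoose v)
      rw [Finset.card_erase_of_mem (Finset.mem_univ R)] at h
      simp only [Finset.card_univ, Fintype.card_fin, smul_eq_mul, mul_one] at h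
      omega
    unfold cod dimD at hcod
    push_cast at hcod
    omega
end
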